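/- Let k and q be integers with q ≥ 10 and k ≥ 3.3·√q, and let T be a tournament with minimum out-degree at least (q − 1)k − 1. Then for every collection 𝓕 = {C₁, …, C_{k−1}} of k − 1 pairwise vertex-disjoint q-cycles of T, there exists a collection of k pairwise vertex-disjoint q-cycles of T whose union of vertex sets meets V(T) ∖ (V(C₁) ∪ ⋯ ∪ V(C_{k−1})) in at most 3q vertices. -/

import Mathlib

open Set

/-- `T` is a tournament: irreflexive, and for distinct vertices exactly one
of the two possible arcs is present. -/
def IsTournament {V : Type*} (T : V → V → Prop) : Prop :=
  (∀ x, ¬ T x x) ∧ ∀ x y, x ≠ y → (T x y ↔ ¬ T y x)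

/-- `c` is a directed cycle of length `q` in the digraph `T`. -/
def IsCycle {V : Type*} (T : V → V → Prop) (q : ℕ) (c : ZMod q → V) : Prop :=
  Function.Injective c ∧ ∀ i, T (c i) (c (i + 1))

/-- The cycles in the family `C` are pairwise vertex-disjoint. -/
def DisjointCycles {V : Type*} {k q : ℕ} (C : Fin k → ZMod q → V) : Prop :=
  ∀ j j' : Fin k, j ≠ j' → Disjoint (Set.range (C j)) (Set.range (C j'))

/-- `T` contains `k` pairwise vertex-disjoint directed cycles of length `q`. -/
def HasDisjointCycles {V : Type*} (T : V → V → Prop) (k q : ℕ) : Prop :=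
  ∃ C : Fin k → ZMod q → V, (∀ j, IsCycle T q (C j)) ∧ DisjointCycles C

/-- The out-degree of a vertex `v`. -/
noncomputable def outDeg {V : Type*} (T : V → V → Prop) (v : V) : ℕ :=
  {w | T v w}.ncard

/-- `d⁺(v, Y)`: the number of out-neighbours of `v` inside the set `Y`. -/
noncomputable def outDegTo {V : Type*} (T : V → V → Prop) (v : V) (Y : Set V) : ℕ :=
  {w ∈ Y | T v w}.ncard

/-- `d⁺(X, v)`: the number of in-neighbours of `v` inside the set `X`. -/
noncomputable def inDegFrom {V : Type*} (T : V → V → Prop) (X : Set V) (v : V) : ℕ :=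
  {x ∈ X | T x v}.ncard

/-- `d⁺(X, Y)`: the number of arcs from `X` to `Y`. -/
noncomputable def arcs {V : Type*} (T : V → V → Prop) (X Y : Set V) : ℕ :=
  {p : V × V | p.1 ∈ X ∧ p.2 ∈ Y ∧ T p.1 p.2}.ncard

/-- There is an `r`-matching from `X` to `Y`: `r` arcs from `X` to `Y` that
pairwise share no endpoints. -/
def HasMatching {V : Type*} (T : V → V → Prop) (X Y : Set V) (r : ℕ) : Prop :=
  ∃ e : Fin r → V × V,
    (∀ i, (e i).1 ∈ X ∧ (e i).2 ∈ Y ∧ T (e i).1 (e i).2) ∧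
    ∀ i j, i ≠ j → (e i).1 ≠ (e j).1 ∧ (e i).2 ≠ (e j).2

/-- `u` is a Hamiltonian path of the subtournament induced on `S`, written as
`P = (u_{l} … u₂ u₁)`: the vertex `u ⟨0,_⟩` is `u₁`, and each arc goes from the
higher-indexed vertex to the next lower-indexed one. -/
def IsHamPathOn {V : Type*} (T : V → V → Prop) (S : Set V) {l : ℕ}
    (u : Fin l → V) : Prop :=
  Function.Injective u ∧ Set.range u = S ∧
    ∀ (i : ℕ) (h : i + 1 < l), T (u ⟨i + 1, h⟩) (u ⟨i, Nat.lt_of_succ_lt h⟩)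

/-!
Let `W` be the vertex set of the given `n = k - 1` cycles and `U` its complement; we may assume that
`U` contains no `q`-cycle, since otherwise such a cycle can be added to the family. By Moon's
theorem every strong component of the tournament on `U` then has fewer than `q` vertices, so `U` has
out-closed subsets `B ⊆ Y` with `2 ≤ |B| ≤ q`, `|Y| < 4q` and `|Y \ B| ≥ 2(q - 3)`. All arcs
between `A = U \ Y` and `M = Y \ B` go from `A` to `M`, and all arcs between `M` and `B` go from
`M` to `B`.

If more than `n` vertices of `W` have two in-neighbours in `B` and two out-neighbours in `A`, two of
them, `c₁` and `c₂`, lie on the same cycle. This cycle can be replaced by two disjoint cycles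
`bᵢ → cᵢ → aᵢ → Mᵢ → bᵢ`, where `Mᵢ` is a Hamiltonian path on `q - 3` vertices of `M`.

Otherwise there is a contradiction: as `B` and `Y` are out-closed in `U`, the degree condition makes
most arcs between `W` and these sets point into `W`. Hence few vertices of `W` have fewer than two
in-neighbours in `B`, so most vertices of `W` have at most one out-neighbour in `A`, and
their remaining out-degree requires more arcs from `W` to `Y` than there are.
-/

namespace IsTournament

variable {V : Type*} {T : V → V → Prop} {v : V}

theorem asymm (hT : IsTournament T) {x y : V} (hxy : T x y) : ¬ T y x := by
  rcases eq_or_ne x y with rfl | hne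
  · exact hT.1 x
  · exact (hT.2 x y hne).1 hxy

theorem ne (hT : IsTournament T) {x y : V} (hxy : T x y) : x ≠ y := by
  rintro rfl
  exact hT.1 x hxy

theorem of_not (hT : IsTournament T) {x y : V} (hne : x ≠ y) (hxy : ¬ T x y) : T y x :=
  (hT.2 y x hne.symm).2 hxy

theorem exists_append_eq_of_notMem (hT : IsTournament T) {l : List V} (hv : v ∉ l) :
    ∃ l₁ l₂, l = l₁ ++ l₂ ∧ (∀ u ∈ l₁.getLast?, T u v) ∧ ∀ w ∈ l₂.head?, T v w := by
  classical
  refine ⟨l.takeWhile (T · v), l.dropWhile (T · v), List.takeWhile_append_dropWhile.symm,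
    fun u hu => by simpa using List.mem_takeWhile_imp (List.mem_of_getLast? hu), fun w hw => ?_⟩
  have hwl : w ∈ l := (List.dropWhile_sublist _).mem (List.mem_of_mem_head? hw)
  refine hT.of_not (ne_of_mem_of_not_mem hwl hv) ?_
  have := List.head?_dropWhile_not (fun x => decide (T x v)) l
  rw [Option.mem_def.1 hw] at this
  simpa using this

end IsTournament

section Paths

variable {V : Type*} {T : V → V → Prop} {v x : V}

theorem isChain_append_cons {l₁ l₂ : List V} (h : (l₁ ++ l₂).IsChain T)
    (h₁ : ∀ u ∈ l₁.getLast?, T u v) (h₂ : ∀ w ∈ l₂.head?, T v w) : (l₁ ++ v :: l₂).IsChain T := by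
  grind [List.isChain_append, List.isChain_cons]

theorem exists_hamiltonian_path (hT : IsTournament T) {S : Set V} (hS : S.Finite) :
    ∃ l : List V, l.Nodup ∧ l.IsChain T ∧ ∀ x, x ∈ l ↔ x ∈ S := by
  induction S, hS using Set.Finite.induction_on with
  | empty => exact ⟨[], by simp⟩
  | @insert v S hv _ ih =>
    obtain ⟨l, hnodup, hchain, hmem⟩ := ih
    obtain ⟨l₁, l₂, rfl, h₁, h₂⟩ := hT.exists_append_eq_of_notMem (mt (hmem v).1 hv)
    refine ⟨l₁ ++ v :: l₂, List.nodup_middle.2 (List.nodup_cons.2 ⟨mt (hmem v).1 hv, hnodup⟩),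
      isChain_append_cons hchain h₁ h₂, fun x => ?_⟩
    rw [List.perm_middle.mem_iff, List.mem_cons, hmem, Set.mem_insert_iff]

theorem exists_isCycle_of_chain {l : List V} (hne : l ≠ []) (hnodup : l.Nodup)
    (hchain : Cycle.Chain T l) :
    ∃ c : ZMod l.length → V, IsCycle T l.length c ∧ range c = {x | x ∈ l} := by
  obtain ⟨a, t, rfl⟩ := List.exists_cons_of_ne_nil hne
  have harc : ∀ i : Fin (t.length + 1), T ((a :: t).get i) ((a :: t).get (i + 1)) := fun i => by
    rw [Cycle.chain_coe_cons, ← List.cons_append, List.isChain_iff_getElem] at hchain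
    have hi := hchain i (by simpa using i.is_le)
    rw [List.getElem_append_left i.is_lt] at hi
    induction i using Fin.lastCases with
    | last => simpa [Fin.last_add_one] using hi
    | cast i => simpa [Fin.coeSucc_eq_succ, List.getElem_append_left] using hi
  exact ⟨(a :: t).get, ⟨hnodup.injective_get, harc⟩, Set.range_list_get _⟩

theorem exists_perm_chain_of_cons (hT : IsTournament T) {t : List V} {y : V}
    (hchain : Cycle.Chain T (x :: t)) (hv : v ∉ t) (hxv : T x v) (hy : y ∈ t) (hvy : T v y) :
    ∃ l : List V, l.Perm (v :: x :: t) ∧ Cycle.Chain T l := by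
  obtain ⟨r, t₂, rfl⟩ := List.mem_iff_append.1 hy
  have hvr : v ∉ r := fun h => hv (List.mem_append_left _ h)
  obtain ⟨p, s, rfl, hp, hs⟩ := hT.exists_append_eq_of_notMem hvr
  refine ⟨(x :: p) ++ v :: (s ++ y :: t₂), List.perm_middle.trans (by simp), ?_⟩
  rw [Cycle.chain_coe_cons] at hchain
  rw [List.cons_append, Cycle.chain_coe_cons]
  have h := isChain_append_cons (v := v) (l₁ := x :: p) (l₂ := s ++ y :: t₂ ++ [x])
    (by simpa using hchain)
    (by rw [List.getLast?_cons]; cases h : p.getLast? <;> simp_all)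
    (by cases s <;> simp_all)
  simpa using h

theorem exists_perm_chain (hT : IsTournament T) {l : List V} {y : V} (hchain : Cycle.Chain T l)
    (hv : v ∉ l) (hx : x ∈ l) (hxv : T x v) (hy : y ∈ l) (hvy : T v y) :
    ∃ l' : List V, l'.Perm (v :: l) ∧ Cycle.Chain T l' := by
  obtain ⟨l₁, l₂, rfl⟩ := List.mem_iff_append.1 hx
  have hrot : l₁ ++ x :: l₂ ~r x :: l₂ ++ l₁ := List.isRotated_append
  rw [Cycle.coe_eq_coe.2 hrot] at hchain
  have hyx : y ≠ x := by
    rintro rfl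
    exact hT.asymm hxv hvy
  have hyt : y ∈ l₂ ++ l₁ := List.mem_of_ne_of_mem hyx (hrot.mem_iff.1 hy)
  have hvt : v ∉ l₂ ++ l₁ := fun h => hv (hrot.mem_iff.2 (List.mem_cons_of_mem x h))
  obtain ⟨l', hperm, hchain'⟩ := exists_perm_chain_of_cons hT hchain hvt hxv hyt hvy
  exact ⟨l', hperm.trans (hrot.perm.symm.cons v), hchain'⟩

theorem chain_append_of_forall {p l : List V} (hp : p.IsChain T) (hl : l.IsChain T) (hp₀ : p ≠ [])
    (hl₀ : l ≠ []) (hlp : ∀ a ∈ p.head?, ∀ y ∈ l, T y a) (hpl : ∀ b ∈ p.getLast?, ∀ y ∈ l, T b y) :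
    Cycle.Chain T (p ++ l) := by
  obtain ⟨a, p, rfl⟩ := List.exists_cons_of_ne_nil hp₀
  rw [List.cons_append, Cycle.chain_coe_cons, ← List.cons_append, ← List.cons_append,
    List.isChain_append, List.isChain_append]
  refine ⟨⟨hp, hl, fun b hb y hy => hpl b hb y (List.mem_of_mem_head? hy)⟩, .singleton a, ?_⟩
  rintro y hy _ ⟨⟩
  rw [List.getLast?_append_of_ne_nil _ hl₀] at hy
  exact hlp a rfl y (List.mem_of_getLast? hy)

theorem ncard_setOf_mem_list {l : List V} (hnodup : l.Nodup) : {x | x ∈ l}.ncard = l.length := by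
  classical
  rw [← List.coe_toFinset, ncard_coe_finset, List.toFinset_card_of_nodup hnodup]

end Paths

/-- `X` is a subset of `U` that no arc of the subdigraph induced on `U` leaves. In a
tournament these are the unions of final segments of the linearly ordered strong components. -/
def IsOutClosed {V : Type*} (T : V → V → Prop) (U X : Set V) : Prop :=
  X ⊆ U ∧ ∀ x ∈ X, ∀ y ∈ U, T x y → y ∈ X

/-- The subdigraph induced on `S` is strongly connected, expressed by the absence of a nonempty
proper subset without outgoing arcs. -/
def IsStrongOn {V : Type*} (T : V → V → Prop) (S : Set V) : Prop :=
  ∀ X, IsOutClosed T S X → X.Nonempty → X = S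

namespace IsStrongOn

variable {V : Type*} {T : V → V → Prop} {S : Set V}

theorem exists_arc (hS : IsStrongOn T S) {X : Set V} (hXS : X ⊂ S) (hX : X.Nonempty) :
    ∃ x ∈ X, ∃ y ∈ S \ X, T x y := by
  by_contra! h
  refine hXS.ne (hS X ⟨hXS.subset, fun x hx y hy hxy => ?_⟩ hX)
  by_contra hyX
  exact h x hx y ⟨hy, hyX⟩ hxy

theorem exists_cyclic_triple (hT : IsTournament T) (hS : IsStrongOn T S) {v : V}
    (hv : v ∈ S) (hS₁ : S ≠ {v}) : ∃ a ∈ S, ∃ b ∈ S, T v a ∧ T a b ∧ T b v := by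
  have hvS : {v} ⊂ S := (singleton_subset_iff.2 hv).ssubset_of_ne hS₁.symm
  obtain ⟨v, rfl, o, ho, hvo⟩ := hS.exists_arc hvS (singleton_nonempty v)
  have hO : {y ∈ S | T v y} ⊂ S := ⟨sep_subset _ _, fun h => hT.1 v (h hv).2⟩
  obtain ⟨a, ⟨ha, hva⟩, b, ⟨hb, hbO⟩, hab⟩ := hS.exists_arc hO ⟨o, ho.1, hvo⟩
  have hvb : v ≠ b := by
    rintro rfl
    exact hT.asymm hva hab
  exact ⟨a, ha, b, hb, hva, hab, hT.of_not hvb fun h => hbO ⟨hb, h⟩⟩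

/-- Here no outside vertex can be inserted into a cycle on `F`, so each of them dominates `F` or is
dominated by it. -/
theorem exists_arc_of_forall (hT : IsTournament T) (hS : IsStrongOn T S) {F : Set V}
    (hF : F.Nonempty) (hFS : F ⊂ S) (h : ∀ v ∈ S \ F, (∃ x ∈ F, T x v) → ∀ y ∈ F, T y v) :
    ∃ a ∈ S \ F, ∃ b ∈ S \ F, T a b ∧ (∀ y ∈ F, T y a) ∧ ∀ y ∈ F, T b y := by
  obtain ⟨x, hx, o, ho, hxo⟩ := hS.exists_arc hFS hF
  set O := {v ∈ S \ F | ∀ y ∈ F, T y v}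
  have hOS : O ⊂ S := ⟨fun v hv => hv.1.1, fun hSO => (hSO (hFS.subset hx)).1.2 hx⟩
  obtain ⟨a, ⟨haF, ha⟩, b, ⟨hb, hbO⟩, hab⟩ := hS.exists_arc hOS ⟨o, ho, h o ho ⟨x, hx, hxo⟩⟩
  have hbF : b ∉ F := fun hbF => hT.asymm hab (ha b hbF)
  refine ⟨a, haF, b, ⟨hb, hbF⟩, hab, ha, fun y hy => ?_⟩
  exact hT.of_not (ne_of_mem_of_not_mem hy hbF)
    fun hyb => hbO ⟨⟨hb, hbF⟩, h b ⟨hb, hbF⟩ ⟨y, hy, hyb⟩⟩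

theorem exists_chain_length_succ (hT : IsTournament T) (hS : IsStrongOn T S) {l : List V}
    (hlen : 2 ≤ l.length) (hnodup : l.Nodup) (hchain : Cycle.Chain T l) (hlS : {x | x ∈ l} ⊂ S) :
    ∃ l' : List V, l'.Nodup ∧ Cycle.Chain T l' ∧ l'.length = l.length + 1 ∧ ∀ x ∈ l', x ∈ S := by
  by_cases h : ∃ v ∈ S, v ∉ l ∧ (∃ x ∈ l, T x v) ∧ ∃ y ∈ l, T v y
  · obtain ⟨v, hv, hvl, ⟨x, hx, hxv⟩, y, hy, hvy⟩ := h
    obtain ⟨l', hperm, hchain'⟩ := exists_perm_chain hT hchain hvl hx hxv hy hvy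
    refine ⟨l', hperm.nodup_iff.2 (hnodup.cons hvl), hchain', hperm.length_eq, fun z hz => ?_⟩
    obtain rfl | hz := List.mem_cons.1 (hperm.mem_iff.1 hz)
    exacts [hv, hlS.subset hz]
  · have hdom : ∀ v ∈ S \ {x | x ∈ l}, (∃ x ∈ l, T x v) → ∀ y ∈ l, T y v := fun v hv hxv y hy =>
      hT.of_not (ne_of_mem_of_not_mem hy hv.2).symm fun hvy => h ⟨v, hv.1, hv.2, hxv, y, hy, hvy⟩
    obtain ⟨x, t, rfl⟩ := List.exists_cons_of_length_pos (by lia : 0 < l.length)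
    obtain ⟨a, ha, b, hb, hab, hla, hbl⟩ :=
      hS.exists_arc_of_forall hT ⟨x, List.mem_cons_self⟩ hlS hdom
    have htl : t ⊆ x :: t := List.subset_cons_self x t
    have ht : t.IsChain T := by
      rw [Cycle.chain_coe_cons] at hchain
      exact hchain.tail.left_of_append
    refine ⟨[a, b] ++ t, ?_, ?_, by simp, ?_⟩
    · simpa [hT.ne hab, mt (@htl a) ha.2, mt (@htl b) hb.2] using hnodup.of_cons
    · exact chain_append_of_forall (by simpa using hab) ht (by simp) (by rintro rfl; simp at hlen)
        (by simpa using fun y hy => hla y (htl hy)) (by simpa using fun y hy => hbl y (htl hy))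
    · simpa [ha.1, hb.1] using fun z hz => hlS.subset (htl hz)

theorem exists_isCycle (hT : IsTournament T) (hS : IsStrongOn T S) {m : ℕ} (hm : 3 ≤ m)
    (hmS : m ≤ S.ncard) : ∃ c : ZMod m → V, IsCycle T m c ∧ range c ⊆ S := by
  obtain ⟨l, hnodup, hchain, rfl, hlS⟩ : ∃ l : List V, l.Nodup ∧ Cycle.Chain T l ∧
      l.length = m ∧ ∀ x ∈ l, x ∈ S := by
    induction m, hm using Nat.le_induction with
    | base =>
      obtain ⟨v, hv⟩ := nonempty_of_ncard_ne_zero (s := S) (by lia)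
      obtain ⟨a, ha, b, hb, hva, hab, hbv⟩ :=
        hS.exists_cyclic_triple hT hv (by rintro rfl; simp at hmS)
      refine ⟨[v, a, b], ?_, ?_, rfl, by simp [*]⟩
      · simp [hT.ne hva, hT.ne hab, (hT.ne hbv).symm]
      · simp [hva, hab, hbv]
    | succ m hm ih =>
      obtain ⟨l, hnodup, hchain, rfl, hlS⟩ := ih (by lia)
      refine exists_chain_length_succ hT hS (by lia) hnodup hchain
        (ssubset_of_subset_of_ne hlS ?_)
      rintro rfl
      rw [ncard_setOf_mem_list hnodup] at hmS
      lia
  obtain ⟨c, hc, hrange⟩ := exists_isCycle_of_chain (by rintro rfl; simp at hm) hnodup hchain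
  exact ⟨c, hc, hrange.trans_subset hlS⟩

end IsStrongOn

namespace IsOutClosed

variable {V : Type*} {T : V → V → Prop} {U X : Set V}

theorem arc_of_notMem (hT : IsTournament T) (hX : IsOutClosed T U X) {x y : V} (hx : x ∈ X)
    (hy : y ∈ U) (hyX : y ∉ X) : T y x :=
  hT.of_not (ne_of_mem_of_not_mem hx hyX) fun h => hyX (hX.2 x hx y hy h)

theorem exists_ssuperset [Finite V] (hX : IsOutClosed T U X) (hXU : X ≠ U) :
    ∃ Y, IsOutClosed T U Y ∧ X ⊂ Y ∧ IsStrongOn T (Y \ X) := by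
  have hU : IsOutClosed T U U := ⟨Subset.rfl, fun _ _ _ hy _ => hy⟩
  obtain ⟨Y, ⟨hY, hXY⟩, hmin⟩ := exists_minimal_of_wellFoundedLT
    (fun Y => IsOutClosed T U Y ∧ X ⊂ Y) ⟨U, hU, hX.1.ssubset_of_ne hXU⟩
  refine ⟨Y, hY, hXY, fun Z hZ hZne => hZ.1.antisymm ?_⟩
  have hXZY : X ∪ Z ⊆ Y := union_subset hXY.subset fun z hz => (hZ.1 hz).1
  have hclosed : IsOutClosed T U (X ∪ Z) := by
    refine ⟨hXZY.trans hY.1, ?_⟩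
    rintro x (hx | hx) y hy hxy
    · exact Or.inl (hX.2 x hx y hy hxy)
    · have hyY : y ∈ Y := hY.2 x (hZ.1 hx).1 y hy hxy
      by_cases hyX : y ∈ X
      exacts [Or.inl hyX, Or.inr (hZ.2 x hx y ⟨hyY, hyX⟩ hxy)]
  obtain ⟨z, hz⟩ := hZne
  have hXZ : X ⊂ X ∪ Z := ⟨subset_union_left, fun h => (hZ.1 hz).2 (h (Or.inr hz))⟩
  exact sdiff_subset_iff.2 (hmin ⟨hclosed, hXZ⟩ hXZY)

theorem exists_superset_ncard [Finite V] (hT : IsTournament T) {q : ℕ}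
    (hq : 3 ≤ q) (hfree : ∀ c, IsCycle T q c → ¬ range c ⊆ U) (hX : IsOutClosed T U X) {m : ℕ}
    (hXm : X.ncard ≤ m) (hmU : m ≤ U.ncard) :
    ∃ Y, IsOutClosed T U Y ∧ X ⊆ Y ∧ m ≤ Y.ncard ∧ Y.ncard + 2 ≤ m + q := by
  induction m, hXm using Nat.le_induction with
  | base => exact ⟨X, hX, Subset.rfl, le_rfl, by lia⟩
  | succ m _ ih =>
    obtain ⟨Y, hY, hXY, hmY, hYm⟩ := ih (by lia)
    by_cases h : m + 1 ≤ Y.ncard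
    · exact ⟨Y, hY, hXY, h, by lia⟩
    obtain ⟨Z, hZ, hYZ, hstrong⟩ := hY.exists_ssuperset (by rintro rfl; lia)
    have hsmall : (Z \ Y).ncard < q := by
      by_contra! hlarge
      obtain ⟨c, hc, hcZ⟩ := hstrong.exists_isCycle hT hq hlarge
      exact hfree c hc (hcZ.trans (sdiff_subset.trans hZ.1))
    have hcard := ncard_sdiff_add_ncard_of_subset hYZ.subset
    have hlt := ncard_lt_ncard hYZ
    exact ⟨Z, hZ, hXY.trans hYZ.subset, by lia, by lia⟩

end IsOutClosed

section Counting

variable {V : Type*} {T : V → V → Prop} {X Y Z : Set V} {v : V} {d : ℕ}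

theorem outDegTo_le_ncard [Finite V] : outDegTo T v Y ≤ Y.ncard :=
  ncard_le_ncard (sep_subset _ _)

theorem outDegTo_union_le [Finite V] : outDegTo T v (Y ∪ Z) ≤ outDegTo T v Y + outDegTo T v Z := by
  refine (ncard_le_ncard fun w hw => ?_).trans (ncard_union_le _ _)
  exact hw.1.imp (⟨·, hw.2⟩) (⟨·, hw.2⟩)

theorem outDegTo_univ : outDegTo T v univ = outDeg T v := by
  simp [outDegTo, outDeg]

theorem outDegTo_add_inDegFrom [Finite V] (hT : IsTournament T) (hv : v ∉ Y) :
    outDegTo T v Y + inDegFrom T Y v = Y.ncard := by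
  rw [outDegTo, inDegFrom, ← ncard_union_eq]
  · congr 1
    ext y
    have := hT.2 v y
    simp only [mem_union, mem_ofPred_eq]
    grind
  · exact disjoint_left.2 fun y hy hy' => hT.asymm hy.2 hy'.2

theorem arcs_eq_sum [Finite V] : arcs T X Y = ∑ x ∈ X.toFinite.toFinset, outDegTo T x Y := by
  classical
  rw [arcs, ncard_eq_toFinset_card _ (toFinite _), Finset.card_eq_sum_card_fiberwise (f := Prod.fst)
    (t := X.toFinite.toFinset) (fun p hp => by simp_all)]
  refine Finset.sum_congr rfl fun x hx => ?_
  rw [outDegTo, ← ncard_image_of_injective _ (Prod.mk_right_injective x), ← ncard_coe_finset]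
  congr 1
  ext ⟨y, z⟩
  have hx : x ∈ X := by simpa using hx
  simp only [Finset.coe_filter, Finite.mem_toFinset, mem_ofPred_eq, mem_image, Prod.mk.injEq,
    exists_eq_right_right]
  grind

theorem arcs_add_arcs [Finite V] (hT : IsTournament T) :
    arcs T X Y + arcs T Y X + (X ∩ Y).ncard = X.ncard * Y.ncard := by
  have hswap : arcs T Y X = {p : V × V | p.1 ∈ X ∧ p.2 ∈ Y ∧ T p.2 p.1}.ncard := by
    rw [arcs, ← ncard_image_of_injective _ Prod.swap_injective, image_swap_eq_preimage_swap]
    congr 1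
    ext ⟨x, y⟩
    simp only [mem_preimage, mem_ofPred_eq, Prod.swap_prod_mk]
    tauto
  have hdiag : Function.Injective fun x : V => (x, x) := fun _ _ h => congrArg Prod.fst h
  rw [hswap, arcs, ← ncard_image_of_injective (X ∩ Y) hdiag, ← ncard_prod, ← ncard_union_eq,
    ← ncard_union_eq]
  · congr 1
    ext ⟨x, y⟩
    have := hT.2 x y
    simp only [mem_union, mem_ofPred_eq, mem_image, mem_inter_iff, Prod.mk.injEq, mem_prod]
    grind
  · rw [disjoint_left]
    rintro _ hp ⟨x, -, rfl⟩
    exact hT.1 x (hp.elim (·.2.2) (·.2.2))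
  · exact disjoint_left.2 fun p hp hp' => hT.asymm hp.2.2 hp'.2.2

theorem ncard_mul_le_arcs [Finite V] (h : ∀ x ∈ X, d ≤ outDegTo T x Y) :
    X.ncard * d ≤ arcs T X Y := by
  rw [arcs_eq_sum, ncard_eq_toFinset_card X, ← smul_eq_mul]
  exact Finset.card_nsmul_le_sum _ _ _ (by simpa using h)

theorem arcs_le_ncard_mul [Finite V] (h : ∀ x ∈ X, outDegTo T x Y ≤ d) :
    arcs T X Y ≤ X.ncard * d := by
  rw [arcs_eq_sum, ncard_eq_toFinset_card X, ← smul_eq_mul]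
  exact Finset.sum_le_card_nsmul _ _ _ (by simpa using h)

theorem arcs_mono_left [Finite V] (h : X ⊆ Z) : arcs T X Y ≤ arcs T Z Y :=
  ncard_le_ncard fun _ hp => ⟨h hp.1, hp.2⟩

theorem arcs_union_right_le [Finite V] : arcs T X (Y ∪ Z) ≤ arcs T X Y + arcs T X Z := by
  simp_rw [arcs_eq_sum, ← Finset.sum_add_distrib]
  exact Finset.sum_le_sum fun x _ => outDegTo_union_le

end Counting

section Degrees

variable {V : Type*} [Finite V] {T : V → V → Prop} {W A B Y S : Set V} {d : ℕ}

theorem IsOutClosed.two_mul_arcs_add_le (hT : IsTournament T) {X : Set V}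
    (hX : IsOutClosed T Wᶜ X) (hd : ∀ x ∈ X, d ≤ outDeg T x) :
    2 * arcs T W X + X.ncard * (2 * d + 1) ≤ X.ncard * (2 * W.ncard + X.ncard) := by
  have hout : ∀ x ∈ X, d ≤ outDegTo T x (W ∪ X) := fun x hx => by
    refine (hd x hx).trans (ncard_le_ncard fun y hy => ⟨?_, hy⟩)
    exact or_iff_not_imp_left.2 fun hyW => hX.2 x hx y hyW hy
  have hWX : W ∩ X = ∅ := (subset_compl_iff_disjoint_left.1 hX.1).inter_eq
  have hle : X.ncard * d ≤ arcs T X W + arcs T X X :=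
    (ncard_mul_le_arcs hout).trans arcs_union_right_le
  have hself : arcs T X X + arcs T X X + X.ncard = X.ncard * X.ncard := by
    simpa using arcs_add_arcs hT (X := X) (Y := X)
  have hcross : arcs T W X + arcs T X W = W.ncard * X.ncard := by
    simpa [hWX] using arcs_add_arcs hT (X := W) (Y := X)
  linarith

theorem two_mul_add_one_le_card [Nonempty V] (hT : IsTournament T) (hd : ∀ v, d ≤ outDeg T v) :
    2 * d + 1 ≤ Nat.card V := by
  have huniv : IsOutClosed T ∅ᶜ univ := ⟨by simp, fun _ _ _ _ _ => mem_univ _⟩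
  have h := huniv.two_mul_arcs_add_le hT fun v _ => hd v
  rw [ncard_univ, ncard_empty] at h
  exact le_of_mul_le_mul_left (by linarith) (Nat.card_pos (α := V))

theorem three_mul_le_ncard_compl [Nonempty V] (hT : IsTournament T) {q n : ℕ} (hq : 9 ≤ q)
    (hn : 2 ≤ n) (hd : d + 1 = (q - 1) * (n + 1)) (hdeg : ∀ v, d ≤ outDeg T v)
    (hW : W.ncard = n * q) : 3 * q ≤ Wᶜ.ncard := by
  have hcard := two_mul_add_one_le_card hT hdeg
  rw [← ncard_add_ncard_compl W, hW] at hcard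
  obtain ⟨a, rfl⟩ := Nat.exists_eq_add_of_le' hq
  obtain ⟨c, rfl⟩ := Nat.exists_eq_add_of_le' hn
  rw [show a + 9 - 1 = a + 8 from rfl] at hd
  nlinarith

theorem IsOutClosed.ncard_inDegFrom_le_one_add_le (hT : IsTournament T) (hB : IsOutClosed T Wᶜ B)
    (hB₂ : 2 ≤ B.ncard) (hd : ∀ v ∈ B, d ≤ outDeg T v) :
    {c ∈ W | inDegFrom T B c ≤ 1}.ncard + (2 * d + 1) ≤ 2 * W.ncard + B.ncard := by
  obtain ⟨b, hb⟩ := Nat.exists_eq_add_of_le' hB₂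
  have hout : ∀ c ∈ {c ∈ W | inDegFrom T B c ≤ 1}, b + 1 ≤ outDegTo T c B := fun c hc => by
    have := outDegTo_add_inDegFrom hT fun hcB : c ∈ B => hB.1 hcB hc.1
    have := hc.2
    lia
  have hbad := (ncard_mul_le_arcs hout).trans (arcs_mono_left (sep_subset _ _))
  have hle := hB.two_mul_arcs_add_le hT hd
  rw [hb] at hle ⊢
  refine le_of_mul_le_mul_left ?_ (Nat.succ_pos (b + 1))
  nlinarith

theorem ncard_mul_le_of_outDegTo_le_one (hT : IsTournament T) (hcover : W ∪ Y ∪ A = univ)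
    (hSW : S ⊆ W) (hS : ∀ c ∈ S, outDegTo T c A ≤ 1) (hd : ∀ v ∈ S, d ≤ outDeg T v) :
    S.ncard * (2 * d) ≤ S.ncard * (S.ncard + 2 * (W \ S).ncard + 1) + 2 * arcs T W Y := by
  have hout : ∀ c ∈ S, d ≤ outDegTo T c (S ∪ (W \ S) ∪ Y ∪ A) := fun c hc => by
    rw [union_sdiff_cancel hSW, hcover, outDegTo_univ]
    exact hd c hc
  have hself : arcs T S S + arcs T S S + S.ncard = S.ncard * S.ncard := by
    simpa using arcs_add_arcs hT (X := S) (Y := S)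
  have hrest : arcs T S (W \ S) ≤ S.ncard * (W \ S).ncard :=
    arcs_le_ncard_mul fun _ _ => outDegTo_le_ncard
  have hY : arcs T S Y ≤ arcs T W Y := arcs_mono_left hSW
  have hA : arcs T S A ≤ S.ncard * 1 := arcs_le_ncard_mul hS
  have hsplit : S.ncard * d ≤ arcs T S S + arcs T S (W \ S) + arcs T S Y + arcs T S A := by
    grw [ncard_mul_le_arcs hout, arcs_union_right_le, arcs_union_right_le, arcs_union_right_le]
  linarith

/-- In the application `s` is the number of vertices of the cycles with at most one out-neighbour
in `A` and `r` the number of the others, `b` counts the vertices of the cycles with at most one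
in-neighbour in `B`, and `y` is the size of `Y`. -/
theorem counting_contradiction {q n d s r b y : ℕ} (hq : 9 ≤ q) (hn : 2 ≤ n)
    (hd : d + 1 = (q - 1) * (n + 1)) (hsr : s + r = n * q) (hr : r ≤ n + b)
    (hb : b + (2 * d + 1) ≤ 2 * (n * q) + q) (hy : y + 8 ≤ 4 * q)
    (hs : s * (2 * d) + y * (2 * d + 1) ≤ s * (s + 2 * r + 1) + y * (2 * (n * q) + y)) : False := by
  have hq₁ : 1 ≤ q := by lia
  zify [hq₁] at *
  have hs' : ((q : ℤ) - 3) * (n + 1) ≤ s := by linarith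
  have hfactor : ((q : ℤ) - 5) * (n + 1) + (2 * q - 3) ≤ 2 * d - n * q - r - 1 := by linarith
  have hle : s * (2 * d - n * q - r - 1) ≤ (y : ℤ) * (y + 2 * n - 2 * q + 3) := by
    linear_combination hs + s * hsr - 2 * y * hd
  have hnonneg : 0 ≤ ((q : ℤ) - 5) * (n + 1) + (2 * q - 3) := by nlinarith
  have hlarge : ((q : ℤ) - 3) * (n + 1) * ((q - 5) * (n + 1) + (2 * q - 3)) ≤
      s * (2 * d - n * q - r - 1) :=
    mul_le_mul hs' hfactor hnonneg (by positivity)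
  have hsmall : (y : ℤ) * (y + 2 * n - 2 * q + 3) ≤ (4 * q - 8) * (2 * q + 2 * n - 5) := by
    calc (y : ℤ) * (y + 2 * n - 2 * q + 3)
      _ ≤ y * (2 * q + 2 * n - 5) := mul_le_mul_of_nonneg_left (by linarith) (by positivity)
      _ ≤ _ := mul_le_mul_of_nonneg_right (by linarith) (by linarith)
  obtain ⟨a, ha⟩ := Int.le.dest hq
  obtain ⟨c, hc⟩ := Int.le.dest hn
  have : (4 * q - 8) * (2 * q + 2 * n - 5) <
      ((q : ℤ) - 3) * (n + 1) * ((q - 5) * (n + 1) + (2 * q - 3)) := by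
    rw [← ha, ← hc, ← sub_pos]
    ring_nf
    positivity
  linarith

end Degrees

/-- The vertex `c` connects `B` to `A`: it has in-neighbours in `B` and out-neighbours in `A`, at
least two of each, so that disjoint cycles can be routed through any two connectors. -/
def IsConnector {V : Type*} (T : V → V → Prop) (A B : Set V) (c : V) : Prop :=
  2 ≤ inDegFrom T B c ∧ 2 ≤ outDegTo T c A

section Exchange

variable {V : Type*} {T : V → V → Prop} {q n : ℕ} {C : Fin n → ZMod q → V} {A B M : Set V}

theorem DisjointCycles.cons (hC : DisjointCycles C) {c : ZMod q → V}
    (hc : ∀ j, Disjoint (range c) (range (C j))) :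
    DisjointCycles (Fin.cons c C : Fin (n + 1) → ZMod q → V) := by
  intro i j hij
  induction i using Fin.cases with
  | zero =>
    induction j using Fin.cases with
    | zero => exact absurd rfl hij
    | succ j => exact hc j
  | succ i =>
    induction j using Fin.cases with
    | zero => exact (hc i).symm
    | succ j => exact hC i j (ne_of_apply_ne Fin.succ hij)

theorem DisjointCycles.update (hC : DisjointCycles C) {j₀ : Fin n} {c : ZMod q → V}
    (hc : ∀ j, j ≠ j₀ → Disjoint (range c) (range (C j))) :
    DisjointCycles (Function.update C j₀ c) := by
  intro i j hij
  rcases eq_or_ne i j₀ with rfl | hi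
  · simpa [hij.symm] using hc j hij.symm
  · rcases eq_or_ne j j₀ with rfl | hj
    · simpa [hi] using (hc i hi).symm
    · simpa [hi, hj] using hC i j hij

theorem IsCycle.ncard_range {c : ZMod q → V} (hc : IsCycle T q c) : (range c).ncard = q := by
  rw [ncard_range_of_injective hc.1, Nat.card_zmod]

theorem DisjointCycles.ncard_iUnion [Finite V] (hC : DisjointCycles C)
    (hcyc : ∀ j, IsCycle T q (C j)) : (⋃ j, range (C j)).ncard = n * q := by
  rw [ncard_iUnion_of_finite (fun _ => toFinite _) hC]
  simp [finsum_eq_sum_of_fintype, (hcyc _).ncard_range]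

theorem iUnion_range_cons (c : ZMod q → V) (C : Fin n → ZMod q → V) :
    ⋃ j, range ((Fin.cons c C : Fin (n + 1) → ZMod q → V) j) = range c ∪ ⋃ j, range (C j) := by
  ext x
  simp [Fin.exists_fin_succ]

theorem iUnion_range_update_subset (C : Fin n → ZMod q → V) (j₀ : Fin n) (c : ZMod q → V) :
    ⋃ j, range (Function.update C j₀ c j) ⊆ range c ∪ ⋃ j, range (C j) := by
  refine iUnion_subset fun j => ?_
  rcases eq_or_ne j j₀ with rfl | hj
  · simp
  · rw [Function.update_of_ne hj]
    exact subset_union_of_subset_right (subset_iUnion (fun j => range (C j)) j) _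

theorem exists_disjointCycles_of_disjoint [Finite V] (hcyc : ∀ j, IsCycle T q (C j))
    (hC : DisjointCycles C) {c : ZMod q → V} (hc : IsCycle T q c)
    (hcC : range c ⊆ (⋃ j, range (C j))ᶜ) :
    ∃ D : Fin (n + 1) → ZMod q → V, (∀ j, IsCycle T q (D j)) ∧ DisjointCycles D ∧
      ((⋃ j, range (D j)) ∩ (⋃ j, range (C j))ᶜ).ncard ≤ q := by
  refine ⟨Fin.cons c C, Fin.forall_fin_succ.2 ⟨hc, hcyc⟩, hC.cons fun j => ?_, ?_⟩
  · exact (subset_compl_iff_disjoint_right.1 hcC).mono_right (subset_iUnion_of_subset j Subset.rfl)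
  · rw [iUnion_range_cons, union_inter_distrib_right, inter_compl_self, union_empty]
    exact (ncard_le_ncard inter_subset_left).trans hc.ncard_range.le

theorem exists_disjointCycles_of_exchange [Finite V] (hcyc : ∀ j, IsCycle T q (C j))
    (hC : DisjointCycles C) {c₁ c₂ : ZMod q → V} (hc₁ : IsCycle T q c₁) (hc₂ : IsCycle T q c₂)
    (hdisj : Disjoint (range c₁) (range c₂)) {j₀ : Fin n}
    (h₁ : ∀ j, j ≠ j₀ → Disjoint (range c₁) (range (C j)))
    (h₂ : ∀ j, j ≠ j₀ → Disjoint (range c₂) (range (C j))) :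
    ∃ D : Fin (n + 1) → ZMod q → V, (∀ j, IsCycle T q (D j)) ∧ DisjointCycles D ∧
      ((⋃ j, range (D j)) ∩ (⋃ j, range (C j))ᶜ).ncard ≤ 2 * q := by
  have hcyc' : ∀ j, IsCycle T q (Function.update C j₀ c₂ j) :=
    (Function.forall_update_iff C fun _ c => IsCycle T q c).2 ⟨hc₂, fun j _ => hcyc j⟩
  have hdisj' : ∀ j, Disjoint (range c₁) (range (Function.update C j₀ c₂ j)) :=
    (Function.forall_update_iff C fun _ c => Disjoint (range c₁) (range c)).2 ⟨hdisj, h₁⟩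
  refine ⟨Fin.cons c₁ (Function.update C j₀ c₂), Fin.forall_fin_succ.2 ⟨hc₁, hcyc'⟩,
    (hC.update h₂).cons hdisj', ?_⟩
  have hnew : (range c₁ ∪ ⋃ j, range (Function.update C j₀ c₂ j)) ∩ (⋃ j, range (C j))ᶜ ⊆
      range c₁ ∪ range c₂ := by
    rintro x ⟨hx | hx, hxC⟩
    exacts [Or.inl hx, Or.inr ((iUnion_range_update_subset C j₀ c₂ hx).resolve_right hxC)]
  calc _ ≤ (range c₁ ∪ range c₂).ncard := by
        rw [iUnion_range_cons]
        exact ncard_le_ncard hnew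
    _ ≤ (range c₁).ncard + (range c₂).ncard := ncard_union_le _ _
    _ = 2 * q := by rw [hc₁.ncard_range, hc₂.ncard_range, two_mul]

theorem exists_isCycle_of_connecting_path [Finite V] (hT : IsTournament T) {a b c : V}
    (hM : M.Nonempty) (hMq : M.ncard + 3 = q) (haM : ∀ y ∈ M, T a y) (hMb : ∀ y ∈ M, T y b)
    (hbc : T b c) (hca : T c a) (hcM : c ∉ M) :
    ∃ f : ZMod q → V, IsCycle T q f ∧ range f = {b, c, a} ∪ M := by
  obtain ⟨l, hnodup, hchain, hl⟩ := exists_hamiltonian_path hT M.toFinite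
  obtain ⟨y, hy⟩ := hM
  have hab : a ≠ b := by
    rintro rfl
    exact hT.asymm (haM y hy) (hMb y hy)
  have hl₀ : l ≠ [] := List.ne_nil_of_mem ((hl y).2 hy)
  have hlen : l.length = M.ncard := by
    rw [← ncard_setOf_mem_list hnodup]
    simp [hl]
  have hcycle := chain_append_of_forall (p := [b, c, a]) (by simp [hbc, hca]) hchain (by simp) hl₀
    (by simpa [hl] using hMb) (by simpa [hl] using haM)
  have haM' : a ∉ M := fun h => hT.1 a (haM a h)
  have hbM' : b ∉ M := fun h => hT.1 b (hMb b h)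
  have hnodup' : ([b, c, a] ++ l).Nodup := by
    simp [hl, hnodup, haM', hbM', hcM, hT.ne hbc, hT.ne hca, hab.symm]
  obtain rfl : ([b, c, a] ++ l).length = q := by
    simp [hlen, ← hMq]
  obtain ⟨f, hf, hrange⟩ := exists_isCycle_of_chain (by simp) hnodup' hcycle
  refine ⟨f, hf, hrange.trans ?_⟩
  ext z
  simp [hl, or_assoc]

theorem exists_disjoint_subsets_ncard_eq [Finite V] {m : ℕ} (hm : 2 * m ≤ M.ncard) :
    ∃ M₁ ⊆ M, ∃ M₂ ⊆ M, Disjoint M₁ M₂ ∧ M₁.ncard = m ∧ M₂.ncard = m := by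
  obtain ⟨M₁, hM₁, hM₁m⟩ := exists_subset_card_eq (s := M) (n := m) (by lia)
  have hrest := ncard_sdiff_add_ncard_of_subset hM₁
  obtain ⟨M₂, hM₂, hM₂m⟩ := exists_subset_card_eq (s := M \ M₁) (n := m) (by lia)
  exact ⟨M₁, hM₁, M₂, hM₂.trans sdiff_subset, disjoint_sdiff_right.mono_right hM₂, hM₁m, hM₂m⟩

theorem exists_disjoint_cycles_of_connectors [Finite V] (hT : IsTournament T) (hq : 4 ≤ q)
    (hM : 2 * (q - 3) ≤ M.ncard) (hAM : ∀ a ∈ A, ∀ y ∈ M, T a y) (hMB : ∀ y ∈ M, ∀ b ∈ B, T y b)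
    {c₁ c₂ : V} (hc : c₁ ≠ c₂) (h₁ : IsConnector T A B c₁) (h₂ : IsConnector T A B c₂)
    (hc₁ : c₁ ∉ A ∪ B ∪ M) (hc₂ : c₂ ∉ A ∪ B ∪ M) :
    ∃ f₁ f₂ : ZMod q → V, IsCycle T q f₁ ∧ IsCycle T q f₂ ∧ Disjoint (range f₁) (range f₂) ∧
      range f₁ ⊆ insert c₁ (A ∪ B ∪ M) ∧ range f₂ ⊆ insert c₂ (A ∪ B ∪ M) := by
  obtain ⟨M₁, hM₁, M₂, hM₂, hM₁₂, hM₁q, hM₂q⟩ := exists_disjoint_subsets_ncard_eq hM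
  have hM₁q' : M₁.ncard + 3 = q := by lia
  have hM₂q' : M₂.ncard + 3 = q := by lia
  obtain ⟨y₁, hy₁⟩ : M₁.Nonempty := nonempty_of_ncard_ne_zero (by lia)
  obtain ⟨y₂, hy₂⟩ : M₂.Nonempty := nonempty_of_ncard_ne_zero (by lia)
  obtain ⟨a₁, ⟨ha₁, hca₁⟩⟩ := nonempty_of_ncard_ne_zero (two_pos.trans_le h₁.2).ne'
  obtain ⟨b₁, ⟨hb₁, hbc₁⟩⟩ := nonempty_of_ncard_ne_zero (two_pos.trans_le h₁.1).ne'
  obtain ⟨a₂, ⟨ha₂, hca₂⟩, ha⟩ := exists_ne_of_one_lt_ncard h₂.2 a₁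
  obtain ⟨b₂, ⟨hb₂, hbc₂⟩, hb⟩ := exists_ne_of_one_lt_ncard h₂.1 b₁
  obtain ⟨f₁, hf₁, hr₁⟩ := exists_isCycle_of_connecting_path hT ⟨y₁, hy₁⟩ hM₁q'
    (fun y hy => hAM a₁ ha₁ y (hM₁ hy)) (fun y hy => hMB y (hM₁ hy) b₁ hb₁) hbc₁ hca₁
    fun h => hc₁ (Or.inr (hM₁ h))
  obtain ⟨f₂, hf₂, hr₂⟩ := exists_isCycle_of_connecting_path hT ⟨y₂, hy₂⟩ hM₂q'
    (fun y hy => hAM a₂ ha₂ y (hM₂ hy)) (fun y hy => hMB y (hM₂ hy) b₂ hb₂) hbc₂ hca₂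
    fun h => hc₂ (Or.inr (hM₂ h))
  have hAB : ∀ a ∈ A, ∀ b ∈ B, a ≠ b := by
    rintro a ha _ hb rfl
    exact hT.asymm (hAM a ha y₁ (hM₁ hy₁)) (hMB y₁ (hM₁ hy₁) a hb)
  have hAM' : ∀ a ∈ A, a ∉ M := fun a ha h => hT.1 a (hAM a ha a h)
  have hBM' : ∀ b ∈ B, b ∉ M := fun b hb h => hT.1 b (hMB b h b hb)
  refine ⟨f₁, f₂, hf₁, hf₂, ?_, ?_, ?_⟩
  · rw [disjoint_left] at hM₁₂
    rw [hr₁, hr₂, disjoint_left]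
    simp only [mem_union, mem_insert_iff, mem_singleton_iff]
    grind
  · rw [hr₁]
    grind
  · rw [hr₂]
    grind

theorem exists_disjointCycles_of_connectors [Finite V] (hT : IsTournament T) (hq : 4 ≤ q)
    (hcyc : ∀ j, IsCycle T q (C j)) (hC : DisjointCycles C)
    (hW : Disjoint (A ∪ B ∪ M) (⋃ j, range (C j)))
    (hM : 2 * (q - 3) ≤ M.ncard) (hAM : ∀ a ∈ A, ∀ y ∈ M, T a y) (hMB : ∀ y ∈ M, ∀ b ∈ B, T y b)
    (hn : n < {c ∈ ⋃ j, range (C j) | IsConnector T A B c}.ncard) :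
    ∃ D : Fin (n + 1) → ZMod q → V, (∀ j, IsCycle T q (D j)) ∧ DisjointCycles D ∧
      ((⋃ j, range (D j)) ∩ (⋃ j, range (C j))ᶜ).ncard ≤ 2 * q := by
  have hmem : ∀ c : {c ∈ ⋃ j, range (C j) | IsConnector T A B c}, ∃ j, c.1 ∈ range (C j) :=
    fun c => mem_iUnion.1 c.2.1
  choose j hj using hmem
  have hninj : ¬ Function.Injective j := fun hinj => by
    have := Nat.card_le_card_of_injective j hinj
    rw [Nat.card_coe_set_eq, Nat.card_fin] at this
    lia
  obtain ⟨⟨c₁, hc₁W, hc₁⟩, ⟨c₂, hc₂W, hc₂⟩, hjj, hc⟩ := Function.not_injective_iff.1 hninj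
  obtain ⟨f₁, f₂, hf₁, hf₂, hf, hr₁, hr₂⟩ := exists_disjoint_cycles_of_connectors hT hq hM hAM hMB
    (Subtype.coe_injective.ne hc) hc₁ hc₂ (hW.notMem_of_mem_right hc₁W)
    (hW.notMem_of_mem_right hc₂W)
  have hdisj : ∀ {c} (hc : c ∈ {c ∈ ⋃ j, range (C j) | IsConnector T A B c}) {f : ZMod q → V},
      range f ⊆ insert c (A ∪ B ∪ M) → ∀ i, i ≠ j ⟨c, hc⟩ → Disjoint (range f) (range (C i)) := by
    intro c hc f hf i hi
    refine Disjoint.mono_left hf (disjoint_insert_left.2 ⟨fun hci => ?_, hW.mono_right ?_⟩)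
    · exact disjoint_left.1 (hC i _ hi) hci (hj ⟨c, hc⟩)
    · exact subset_iUnion (fun i => range (C i)) i
  exact exists_disjointCycles_of_exchange hcyc hC hf₁ hf₂ hf (hdisj _ hr₁)
    (hjj ▸ hdisj _ hr₂)

end Exchange

theorem lt_ncard_isConnector {V : Type*} [Finite V] {T : V → V → Prop} (hT : IsTournament T)
    {W B Y : Set V} {q n d : ℕ} (hq : 9 ≤ q) (hn : 2 ≤ n) (hd : d + 1 = (q - 1) * (n + 1))
    (hdeg : ∀ v, d ≤ outDeg T v) (hW : W.ncard = n * q) (hB : IsOutClosed T Wᶜ B)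
    (hB₂ : 2 ≤ B.ncard) (hBq : B.ncard ≤ q) (hY : IsOutClosed T Wᶜ Y) (hYq : Y.ncard + 8 ≤ 4 * q) :
    n < {c ∈ W | IsConnector T (Wᶜ \ Y) B c}.ncard := by
  by_contra! hfew
  set A := Wᶜ \ Y
  set S := {c ∈ W | outDegTo T c A ≤ 1}
  have hSW : S ⊆ W := sep_subset _ _
  have hcover : W ∪ Y ∪ A = univ := by
    rw [union_assoc, union_sdiff_cancel hY.1, union_compl_self]
  have hsplit : W \ S ⊆ {c ∈ W | IsConnector T A B c} ∪ {c ∈ W | inDegFrom T B c ≤ 1} := by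
    rintro c ⟨hcW, hcS⟩
    have hcA : 2 ≤ outDegTo T c A := by
      by_contra! h
      exact hcS ⟨hcW, Nat.le_of_lt_succ h⟩
    rcases le_or_gt 2 (inDegFrom T B c) with hcB | hcB
    exacts [Or.inl ⟨hcW, hcB, hcA⟩, Or.inr ⟨hcW, Nat.le_of_lt_succ hcB⟩]
  have hr : (W \ S).ncard ≤ n + {c ∈ W | inDegFrom T B c ≤ 1}.ncard := by
    grw [ncard_le_ncard hsplit, ncard_union_le, hfew]
  have hsr : S.ncard + (W \ S).ncard = n * q := by
    rw [add_comm, ncard_sdiff_add_ncard_of_subset hSW, hW]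
  have hb := hB.ncard_inDegFrom_le_one_add_le hT hB₂ fun v _ => hdeg v
  have hs := ncard_mul_le_of_outDegTo_le_one hT hcover hSW (fun _ hc => hc.2) fun v _ => hdeg v
  have hy := hY.two_mul_arcs_add_le hT fun v _ => hdeg v
  rw [hW] at hb hy
  exact counting_contradiction hq hn hd hsr hr (by lia) hYq (by lia)

theorem exists_isOutClosed_pair {V : Type*} [Finite V] {T : V → V → Prop} (hT : IsTournament T)
    {U : Set V} {q : ℕ} (hq : 3 ≤ q) (hfree : ∀ c, IsCycle T q c → ¬ range c ⊆ U)
    (hU : 3 * q ≤ U.ncard) :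
    ∃ B Y, IsOutClosed T U B ∧ IsOutClosed T U Y ∧ B ⊆ Y ∧ 2 ≤ B.ncard ∧ B.ncard ≤ q ∧
      2 * (q - 3) ≤ (Y \ B).ncard ∧ Y.ncard + 8 ≤ 4 * q := by
  have hempty : IsOutClosed T U ∅ := ⟨empty_subset U, by simp⟩
  obtain ⟨B, hB, -, hB₂, hBq⟩ :=
    hempty.exists_superset_ncard hT hq hfree (m := 2) (by simp) (by lia)
  obtain ⟨Y, hY, hBY, hYlarge, hYsmall⟩ :=
    hB.exists_superset_ncard hT hq hfree (m := B.ncard + 2 * (q - 3)) (by lia) (by lia)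
  have hcard := ncard_sdiff_add_ncard_of_subset hBY
  exact ⟨B, Y, hB, hY, hBY, hB₂, by lia, by lia, by lia⟩

theorem stmt2_general {V : Type*} [Finite V] (T : V → V → Prop) (hT : IsTournament T)
    (q k : ℕ) (hq : 9 ≤ q) (hk : 3 ≤ k) (hdeg : ∀ v, (q - 1) * k - 1 ≤ outDeg T v)
    (C : Fin (k - 1) → ZMod q → V) (hC : ∀ j, IsCycle T q (C j)) (hdisj : DisjointCycles C) :
    ∃ D : Fin k → ZMod q → V, (∀ j, IsCycle T q (D j)) ∧ DisjointCycles D ∧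
      ((⋃ j, Set.range (D j)) ∩ (⋃ j, Set.range (C j))ᶜ).ncard ≤ 2 * q := by
  obtain ⟨n, rfl⟩ := Nat.exists_eq_add_of_le' (Nat.one_le_of_lt hk)
  change Fin n → ZMod q → V at C
  set W := ⋃ j, range (C j)
  have hn : 2 ≤ n := Nat.le_of_succ_le_succ hk
  have hd : (q - 1) * (n + 1) - 1 + 1 = (q - 1) * (n + 1) :=
    Nat.sub_add_cancel (Nat.mul_pos (by lia) n.succ_pos)
  have : Nonempty V := ⟨C ⟨0, by lia⟩ 0⟩
  have hW : W.ncard = n * q := hdisj.ncard_iUnion hC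
  by_cases hfree : ∃ c, IsCycle T q c ∧ range c ⊆ Wᶜ
  · obtain ⟨c, hc, hcW⟩ := hfree
    obtain ⟨D, hD, hD', hcard⟩ := exists_disjointCycles_of_disjoint hC hdisj hc hcW
    exact ⟨D, hD, hD', hcard.trans (by lia)⟩
  push Not at hfree
  obtain ⟨B, Y, hB, hY, -, hB₂, hBq, hYB, hYq⟩ :=
    exists_isOutClosed_pair hT (by lia) hfree (three_mul_le_ncard_compl hT hq hn hd hdeg hW)
  have hsub : Wᶜ \ Y ∪ B ∪ Y \ B ⊆ Wᶜ :=
    union_subset (union_subset sdiff_subset hB.1) (sdiff_subset.trans hY.1)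
  exact exists_disjointCycles_of_connectors hT (by lia) hC hdisj
    (subset_compl_iff_disjoint_right.1 hsub) hYB
    (fun a ha y hy => hY.arc_of_notMem hT hy.1 ha.1 ha.2)
    (fun y hy b hb => hB.arc_of_notMem hT hb (hY.1 hy.1) hy.2)
    (lt_ncard_isConnector hT hq hn hd hdeg hW hB hB₂ hBq hY hYq)

theorem stmt2 {V : Type*} [Fintype V] (T : V → V → Prop) (hT : IsTournament T)
    (q k : ℕ) (hq : 10 ≤ q) (hk : (3.3 : ℝ) * Real.sqrt q ≤ (k : ℝ))
    (hdeg : ∀ v, (q - 1) * k - 1 ≤ outDeg T v)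
    (C : Fin (k - 1) → ZMod q → V) (hC : ∀ j, IsCycle T q (C j))
    (hdisj : DisjointCycles C) :
    ∃ D : Fin k → ZMod q → V, (∀ j, IsCycle T q (D j)) ∧ DisjointCycles D ∧
      ((⋃ j, Set.range (D j)) ∩ (⋃ j, Set.range (C j))ᶜ).ncard ≤ 3 * q := by
  have hsqrt : 1 ≤ Real.sqrt q := Real.one_le_sqrt.2 (by exact_mod_cast (by lia : 1 ≤ q))
  have hk₃ : 3 ≤ k := by exact_mod_cast (by linarith : (3 : ℝ) ≤ k)
  obtain ⟨D, hD, hD', hcard⟩ := stmt2_general T hT q k (by lia) hk₃ hdeg C hC hdisj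
  exact ⟨D, hD, hD', hcard.trans (by lia)⟩
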